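/- Let h be a separable complex Hilbert space and let A, B be bounded selfadjoint operators on h with 0 ≤ A ≤ 1 and 0 ≤ B ≤ 1 such that Q = A − B is trace class. Let a ∈ ℝ, b ≥ 0, and let μ be a Borel probability measure on [−1,1] with μ({−1}) = μ({1}) = 0. For λ ∈ (−1,1) let T_λ = (2B−1)(1−λ(2B−1))⁻¹, and assume there exists a bounded operator M on h such that for all ψ, η ∈ h the integral ∫_{(−1,1)} ⟨ψ, T_λ η⟩ dμ(λ) converges absolutely and equals ⟨ψ, M η⟩. Define F: (−1,1) → ℝ by F(λ) = (2/λ)( tr Q − ∫_0^∞ tr[ R_{λ,t}(B) Q R_{λ,t}(B) ] dt ) for λ ≠ 0 and F(0) = 2 tr[(1−2B)Q]. Then MQ is trace class, F is μ-integrable on (−1,1), and tr[aQ + bMQ] = a·tr Q − (b/2) ∫_{(−1,1)} F(λ) dμ(λ). -/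

import Mathlib

/-!
Put `X = 2B - 1`, a selfadjoint contraction, so that `R_{λ,t}(B) = (1 + t - λX)⁻¹` and
`T_λ = X (1 - λX)⁻¹`. By cyclicity `tr (R Q R) = tr (R² Q)`, and `d/dt R_{λ,t} = -R_{λ,t}²` with
`R_{λ,t} → 0` gives `∫₀^∞ tr (R_{λ,t}² Q) dt = tr ((1 - λX)⁻¹ Q) = tr Q + λ tr (T_λ Q)`.
Hence `F(λ) = -2 tr (T_λ Q)` (`traceIntegrand_eq`), and the formula reduces to
`∫ tr (T_λ Q) dμ(λ) = tr (M Q)`.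

Traces are handled by writing `Q = K² - L²` with `K`, `L` the square roots of the positive and
negative parts of `Q`. These are Hilbert–Schmidt, and `tr (S K²) = ∑ i, ⟪K e_i, S K e_i⟫`
(`hasSum_trace_conj`), which is manifestly continuous in `S` and real for selfadjoint `S`.

The interchange of trace and `μ`-integral is the analytic point (`integral_quadFunctional`).
The operators `T_λ` need not have integrable norm; only the matrix coefficients are known to be
integrable. By the uniform boundedness principle this already forces
`∫ |⟪ψ, T_λ η⟫| dμ ≤ C ‖ψ‖ ‖η‖` (`exists_weak_bound`), and applying it to `ψ = η = K e_i` makes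
the double series summable.

Finally `MQ` is trace class because `|MQ| ≤ ‖M‖ |Q|`.
-/

open MeasureTheory
open scoped InnerProductSpace ENNReal

/-- The trace of a positive bounded operator `T`, computed in the Hilbert basis `e` as
`∑_i ⟨e_i, T e_i⟩ ∈ [0,∞]`. -/
noncomputable def posTrace {H : Type*} [NormedAddCommGroup H] [InnerProductSpace ℂ H]
    [CompleteSpace H] {ι : Type*} (e : HilbertBasis ι ℂ H) (T : H →L[ℂ] H) : ℝ≥0∞ :=
  ∑' i : ι, ENNReal.ofReal (⟪e i, T (e i)⟫_ℂ).re

/-- `S` is trace class: `tr|S| < ∞`, where `|S| = (S*S)^{1/2}` is defined via the continuous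
functional calculus and the trace is computed in the Hilbert basis `e`. -/
noncomputable def IsTraceClass {H : Type*} [NormedAddCommGroup H] [InnerProductSpace ℂ H]
    [CompleteSpace H] {ι : Type*} (e : HilbertBasis ι ℂ H) (S : H →L[ℂ] H) : Prop :=
  posTrace e (cfc Real.sqrt (star S * S)) ≠ ⊤

/-- The resolvent `R_{λ,t}(C) = (1 + λ(1−2C) + t)⁻¹` of a bounded operator `C`
(defined via `Ring.inverse`, which gives the genuine inverse when it exists). -/
noncomputable def resolventOp {H : Type*} [NormedAddCommGroup H] [InnerProductSpace ℂ H]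
    [CompleteSpace H] (l t : ℝ) (C : H →L[ℂ] H) : H →L[ℂ] H :=
  Ring.inverse (1 + (l:ℂ) • (1 - 2 • C) + (t:ℂ) • 1)

/-- The operator `T_λ = (2B−1)(1−λ(2B−1))⁻¹`. -/
noncomputable def opTlam {H : Type*} [NormedAddCommGroup H] [InnerProductSpace ℂ H]
    [CompleteSpace H] (B : H →L[ℂ] H) (l : ℝ) : H →L[ℂ] H :=
  (2 • B - 1) * Ring.inverse (1 - (l:ℂ) • (2 • B - 1))

/-- The integrand `F(λ) = (2/λ)(tr Q − ∫_0^∞ tr[R_{λ,t}(B) Q R_{λ,t}(B)] dt)` for `λ ≠ 0`,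
with `F(0) = 2 tr[(1−2B)Q]`; all traces computed in the Hilbert basis `e`. -/
noncomputable def traceIntegrand {H : Type*} [NormedAddCommGroup H] [InnerProductSpace ℂ H]
    [CompleteSpace H] {ι : Type*} (e : HilbertBasis ι ℂ H) (B Q : H →L[ℂ] H) (l : ℝ) : ℝ :=
  if l = 0 then 2 * ∑' i : ι, (⟪e i, (((1 : H →L[ℂ] H) - 2 • B) * Q) (e i)⟫_ℂ).re
  else (2/l) * ((∑' i : ι, (⟪e i, Q (e i)⟫_ℂ).re)
    - ∫ t in Set.Ioi (0:ℝ),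
        ∑' i : ι, (⟪e i, (resolventOp l t B * Q * resolventOp l t B) (e i)⟫_ℂ).re)

/-! ### Hilbert–Schmidt operators in a fixed Hilbert basis -/

section HilbertSchmidt

variable {H : Type*} [NormedAddCommGroup H] [InnerProductSpace ℂ H]
  {ι : Type*} (e : HilbertBasis ι ℂ H)

theorem hasSum_parseval (x : H) : HasSum (fun j => ‖⟪e j, x⟫_ℂ‖ ^ 2) (‖x‖ ^ 2) := by
  have h := (Complex.hasSum_re (e.hasSum_inner_mul_inner x x))
  have h2 : (⟪x, x⟫_ℂ).re = ‖x‖ ^ 2 := by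
    rw [← inner_self_eq_norm_sq (𝕜 := ℂ) x]; rfl
  rw [h2] at h
  refine h.congr_fun ?_
  intro j
  rw [← inner_conj_symm x (e j), ← Complex.normSq_eq_norm_sq, ← Complex.normSq_eq_conj_mul_self,
    Complex.ofReal_re]

variable {e}

theorem summable_matrix {X : H →L[ℂ] H} (hX : Summable fun i => ‖X (e i)‖ ^ 2) :
    Summable fun p : ι × ι => ‖⟪e p.2, X (e p.1)⟫_ℂ‖ ^ 2 := by
  rw [summable_prod_of_nonneg (fun p => sq_nonneg _)]
  refine ⟨fun i => (hasSum_parseval e (X (e i))).summable, ?_⟩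
  refine hX.congr fun i => ?_
  exact (hasSum_parseval e (X (e i))).tsum_eq.symm

theorem summable_mul_left {X : H →L[ℂ] H} (S : H →L[ℂ] H)
    (hX : Summable fun i => ‖X (e i)‖ ^ 2) : Summable fun i => ‖(S * X) (e i)‖ ^ 2 := by
  refine Summable.of_nonneg_of_le (fun i => by positivity) (fun i => ?_) (hX.mul_left (‖S‖ ^ 2))
  rw [← mul_pow]
  gcongr
  exact S.le_opNorm _

theorem summable_inner_of_hs {E ι : Type*} [NormedAddCommGroup E] {x y : ι → E} (hx : Summable fun i => ‖x i‖ ^ 2)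
    (hy : Summable fun i => ‖y i‖ ^ 2) : Summable fun i => ‖x i‖ * ‖y i‖ := by
  refine Summable.of_nonneg_of_le (fun i => by positivity) (fun i => ?_) (hx.add hy)
  nlinarith [sq_nonneg (‖x i‖ - ‖y i‖), sq_nonneg ‖x i‖, sq_nonneg ‖y i‖]

variable [CompleteSpace H]

theorem inner_star_left (X : H →L[ℂ] H) (x y : H) : ⟪star X x, y⟫_ℂ = ⟪x, X y⟫_ℂ := by
  rw [ContinuousLinearMap.star_eq_adjoint, ContinuousLinearMap.adjoint_inner_left]

theorem inner_star_right (X : H →L[ℂ] H) (x y : H) : ⟪x, star X y⟫_ℂ = ⟪X x, y⟫_ℂ := by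
  rw [ContinuousLinearMap.star_eq_adjoint, ContinuousLinearMap.adjoint_inner_right]

/-- The adjoint of a Hilbert–Schmidt operator is Hilbert–Schmidt: both sums are the square sum of
the same matrix. -/
theorem summable_star {X : H →L[ℂ] H} (hX : Summable fun i => ‖X (e i)‖ ^ 2) :
    Summable fun i => ‖(star X) (e i)‖ ^ 2 := by
  have h : Summable fun p : ι × ι => ‖⟪e p.1, X (e p.2)⟫_ℂ‖ ^ 2 := (summable_matrix hX).prod_symm
  rw [summable_prod_of_nonneg (fun p => by positivity)] at h
  refine h.2.congr fun j => ?_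
  rw [← (hasSum_parseval e (star X (e j))).tsum_eq]
  refine tsum_congr fun i => ?_
  rw [inner_star_right, ← inner_conj_symm, RCLike.norm_conj]

theorem summable_mul_right {X : H →L[ℂ] H} (S : H →L[ℂ] H)
    (hX : Summable fun i => ‖X (e i)‖ ^ 2) : Summable fun i => ‖(X * S) (e i)‖ ^ 2 := by
  have h := summable_star (summable_mul_left (star S) (summable_star hX))
  simpa using h

/-- Cyclicity `tr (X* Y) = tr (Y X*)` for Hilbert–Schmidt `X`, `Y`: expand by Parseval and
exchange the absolutely convergent double sum. -/
theorem hasSum_inner_swap {X Y : H →L[ℂ] H} (hX : Summable fun i => ‖X (e i)‖ ^ 2)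
    (hY : Summable fun i => ‖Y (e i)‖ ^ 2) :
    HasSum (fun i => ⟪X (e i), Y (e i)⟫_ℂ) (∑' j, ⟪(star Y) (e j), (star X) (e j)⟫_ℂ) := by
  have hs : Summable fun p : ι × ι => ⟪X (e p.1), e p.2⟫_ℂ * ⟪e p.2, Y (e p.1)⟫_ℂ := by
    refine Summable.of_norm_bounded ((summable_matrix hX).add (summable_matrix hY)) fun p => ?_
    rw [norm_mul, ← inner_conj_symm, RCLike.norm_conj]
    nlinarith [sq_nonneg (‖⟪e p.2, X (e p.1)⟫_ℂ‖ - ‖⟪e p.2, Y (e p.1)⟫_ℂ‖),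
      sq_nonneg ‖⟪e p.2, X (e p.1)⟫_ℂ‖, sq_nonneg ‖⟪e p.2, Y (e p.1)⟫_ℂ‖]
  have h1 : Summable fun i => ⟪X (e i), Y (e i)⟫_ℂ :=
    Summable.of_norm_bounded (summable_inner_of_hs hX hY) fun i => norm_inner_le_norm _ _
  have h2 : ∑' i, ⟪X (e i), Y (e i)⟫_ℂ = ∑' j, ⟪(star Y) (e j), (star X) (e j)⟫_ℂ := by
    calc ∑' i, ⟪X (e i), Y (e i)⟫_ℂ
        = ∑' i, ∑' j, ⟪X (e i), e j⟫_ℂ * ⟪e j, Y (e i)⟫_ℂ :=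
          tsum_congr fun i => (e.tsum_inner_mul_inner _ _).symm
      _ = ∑' j, ∑' i, ⟪X (e i), e j⟫_ℂ * ⟪e j, Y (e i)⟫_ℂ :=
          (Summable.tsum_comm (f := fun i j => ⟪X (e i), e j⟫_ℂ * ⟪e j, Y (e i)⟫_ℂ) hs).symm
      _ = _ := by
          refine tsum_congr fun j => ?_
          rw [← e.tsum_inner_mul_inner]
          refine tsum_congr fun i => ?_
          rw [inner_star_left, inner_star_right, mul_comm]
  exact h2 ▸ h1.hasSum

end HilbertSchmidt

/-! ### The functional `S ↦ tr (S K²)` -/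

section TraceFunctional

variable {H : Type*} [NormedAddCommGroup H] [InnerProductSpace ℂ H]

theorem summable_quadratic {ι : Type*} {v : ι → H} (hv : Summable fun i => ‖v i‖ ^ 2)
    (S : H →L[ℂ] H) : Summable fun i => ⟪v i, S (v i)⟫_ℂ := by
  refine Summable.of_norm_bounded (hv.mul_left ‖S‖) fun i => ?_
  refine (norm_inner_le_norm _ _).trans ?_
  nlinarith [S.le_opNorm (v i), norm_nonneg (v i)]

variable [CompleteSpace H]

/-- For a square-summable family `v`, the bounded functional `S ↦ ∑ i, ⟪v i, S (v i)⟫`. When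
`v i = K (e i)` with `K` selfadjoint this is `S ↦ tr (S K²)`. -/
noncomputable def quadFunctional {ι : Type*} (v : ι → H) (hv : Summable fun i => ‖v i‖ ^ 2) :
    (H →L[ℂ] H) →L[ℂ] ℂ :=
  LinearMap.mkContinuous
    { toFun := fun S => ∑' i, ⟪v i, S (v i)⟫_ℂ
      map_add' := fun S T => by
        simp only [_root_.add_apply, inner_add_right]
        exact (summable_quadratic hv S).tsum_add (summable_quadratic hv T)
      map_smul' := fun c S => by
        simp only [_root_.smul_apply, inner_smul_right, tsum_mul_left,
          RingHom.id_apply, smul_eq_mul] }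
    (∑' i, ‖v i‖ ^ 2) fun S => by
      refine tsum_of_norm_bounded (hv.hasSum.mul_right ‖S‖) fun i => ?_
      refine (norm_inner_le_norm _ _).trans ?_
      nlinarith [S.le_opNorm (v i), norm_nonneg (v i)]

theorem quadFunctional_apply {ι : Type*} (v : ι → H) (hv : Summable fun i => ‖v i‖ ^ 2)
    (S : H →L[ℂ] H) : quadFunctional v hv S = ∑' i, ⟪v i, S (v i)⟫_ℂ := rfl

/-- `tr (S K² T) = ∑ i, ⟪K e_i, T S K e_i⟫` for `K` selfadjoint and Hilbert–Schmidt. All traces in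
the trace formula are brought to the right-hand form, which is continuous in `T S`. -/
theorem hasSum_trace_conj {ι : Type*} {e : HilbertBasis ι ℂ H} {K : H →L[ℂ] H}
    (hK : IsSelfAdjoint K) (hv : Summable fun i => ‖K (e i)‖ ^ 2) (S T : H →L[ℂ] H) :
    HasSum (fun i => ⟪e i, (S * (K * K) * T) (e i)⟫_ℂ)
      (quadFunctional (fun i => K (e i)) hv (T * S)) := by
  have h := hasSum_inner_swap (e := e) (X := K * star S) (Y := K * T)
    (summable_mul_right _ hv) (summable_mul_right _ hv)
  rw [quadFunctional_apply]
  convert h using 1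
  · funext i
    rw [← inner_star_right, star_mul, star_star, hK.star_eq]
    rfl
  · refine tsum_congr fun i => ?_
    rw [star_mul, star_mul, star_star, hK.star_eq]
    simp only [mul_apply_eq_comp]
    rw [inner_star_left]

theorem quadFunctional_im {ι : Type*} (v : ι → H) (hv : Summable fun i => ‖v i‖ ^ 2)
    {S : H →L[ℂ] H} (hS : IsSelfAdjoint S) : (quadFunctional v hv S).im = 0 := by
  rw [quadFunctional_apply, Complex.im_tsum (summable_quadratic hv S)]
  have : ∀ i, (⟪v i, S (v i)⟫_ℂ).im = 0 := fun i => by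
    rw [← Complex.conj_eq_iff_im, inner_conj_symm, ← inner_star_right, hS.star_eq]
  simp [this]

theorem quadFunctional_sq_nonneg {ι : Type*} (v : ι → H) (hv : Summable fun i => ‖v i‖ ^ 2)
    {S : H →L[ℂ] H} (hS : IsSelfAdjoint S) : 0 ≤ (quadFunctional v hv (S * S)).re := by
  rw [quadFunctional_apply, Complex.re_tsum (summable_quadratic hv _)]
  refine tsum_nonneg fun i => ?_
  have h : ⟪v i, (S * S) (v i)⟫_ℂ = ⟪S (v i), S (v i)⟫_ℂ := by
    rw [← inner_star_right, hS.star_eq]; rfl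
  rw [h]
  exact inner_self_nonneg (𝕜 := ℂ)

end TraceFunctional

/-! ### Trace class operators -/

section Decomposition

variable {H : Type*} [NormedAddCommGroup H] [InnerProductSpace ℂ H] [CompleteSpace H]

theorem posTrace_mono {ι : Type*} (e : HilbertBasis ι ℂ H) {S T : H →L[ℂ] H} (h : S ≤ T) :
    posTrace e S ≤ posTrace e T := by
  refine ENNReal.tsum_le_tsum fun i => ENNReal.ofReal_le_ofReal ?_
  have h1 := ((ContinuousLinearMap.le_def S T).1 h).inner_nonneg_right (e i)
  have h2 := (Complex.le_def.1 h1).1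
  rw [sub_apply, inner_sub_right, Complex.sub_re] at h2
  simpa using h2

theorem posTrace_smul {ι : Type*} (e : HilbertBasis ι ℂ H) (T : H →L[ℂ] H) {r : ℝ} (hr : 0 ≤ r) :
    posTrace e (r • T) = ENNReal.ofReal r * posTrace e T := by
  rw [posTrace, posTrace, ← ENNReal.tsum_mul_left]
  refine tsum_congr fun i => ?_
  rw [← ENNReal.ofReal_mul hr]
  congr 1
  rw [_root_.smul_apply, ← Complex.coe_smul, inner_smul_right]
  simp

theorem isTraceClass_iff {ι : Type*} (e : HilbertBasis ι ℂ H) (S : H →L[ℂ] H) :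
    IsTraceClass e S ↔ posTrace e (CFC.abs S) ≠ ⊤ := by
  rw [IsTraceClass, CFC.abs, CFC.sqrt_eq_real_sqrt _ (star_mul_self_nonneg S), cfcₙ_eq_cfc]

/-- The trace class is a left ideal: `|MQ|² = Q* M* M Q ≤ ‖M‖² |Q|²`, hence `|MQ| ≤ ‖M‖ |Q|` by
operator monotonicity of the square root. -/
theorem IsTraceClass.mul_left {ι : Type*} {e : HilbertBasis ι ℂ H} {Q : H →L[ℂ] H}
    (hQ : IsTraceClass e Q) (M : H →L[ℂ] H) : IsTraceClass e (M * Q) := by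
  rw [isTraceClass_iff] at hQ ⊢
  have h1 : star (M * Q) * (M * Q) ≤ (‖M‖ • CFC.abs Q) * (‖M‖ • CFC.abs Q) := by
    have := star_left_conjugate_le_conjugate (CStarAlgebra.star_mul_le_algebraMap_norm_sq (a := M)) Q
    rw [smul_mul_smul_comm, CFC.abs_mul_abs, star_mul]
    calc _ = star Q * (star M * M) * Q := by simp only [mul_assoc]
      _ ≤ _ := this
      _ = _ := by rw [Algebra.algebraMap_eq_smul_one, mul_smul_comm, smul_mul_assoc, mul_one, sq]
  have h2 : CFC.abs (M * Q) ≤ ‖M‖ • CFC.abs Q := by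
    have := CFC.sqrt_le_sqrt _ _ h1
    rwa [CFC.sqrt_mul_self _ (smul_nonneg (norm_nonneg M) (CFC.abs_nonneg Q))] at this
  refine ne_top_of_le_ne_top ?_ (posTrace_mono e h2)
  rw [posTrace_smul e _ (norm_nonneg M)]
  exact ENNReal.mul_ne_top ENNReal.ofReal_ne_top hQ

theorem summable_sqrt {ι : Type*} {e : HilbertBasis ι ℂ H} {P : H →L[ℂ] H} (hP : 0 ≤ P)
    (h : posTrace e P ≠ ⊤) : Summable fun i => ‖(CFC.sqrt P) (e i)‖ ^ 2 := by
  have h1 := ENNReal.summable_toReal h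
  refine h1.congr fun i => ?_
  have h2 : ⟪e i, P (e i)⟫_ℂ = ⟪CFC.sqrt P (e i), CFC.sqrt P (e i)⟫_ℂ := by
    have hs : IsSelfAdjoint (CFC.sqrt P) := (CFC.sqrt_nonneg P).isSelfAdjoint
    rw [← inner_star_right, hs.star_eq, ← mul_apply_eq_comp, CFC.sqrt_mul_sqrt_self P hP]
  have h3 : (⟪CFC.sqrt P (e i), CFC.sqrt P (e i)⟫_ℂ).re = ‖CFC.sqrt P (e i)‖ ^ 2 :=
    inner_self_eq_norm_sq (𝕜 := ℂ) _
  rw [h2, h3, ENNReal.toReal_ofReal (by positivity)]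

/-- A selfadjoint trace class operator is a difference of squares of selfadjoint Hilbert–Schmidt
operators, the square roots of its positive and negative parts. -/
theorem exists_hilbertSchmidt_decomposition {ι : Type*} {e : HilbertBasis ι ℂ H}
    {Q : H →L[ℂ] H} (hQ : IsSelfAdjoint Q) (h : IsTraceClass e Q) :
    ∃ K L : H →L[ℂ] H, IsSelfAdjoint K ∧ IsSelfAdjoint L ∧
      (Summable fun i => ‖K (e i)‖ ^ 2) ∧ (Summable fun i => ‖L (e i)‖ ^ 2) ∧
      Q = K * K - L * L := by
  rw [isTraceClass_iff] at h
  have hp := CFC.posPart_nonneg Q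
  have hn := CFC.negPart_nonneg Q
  have habs := CFC.posPart_add_negPart Q hQ
  refine ⟨CFC.sqrt Q⁺, CFC.sqrt Q⁻, (CFC.sqrt_nonneg _).isSelfAdjoint,
    (CFC.sqrt_nonneg _).isSelfAdjoint, summable_sqrt hp ?_, summable_sqrt hn ?_, ?_⟩
  · exact ne_top_of_le_ne_top h (posTrace_mono e (habs ▸ le_add_of_nonneg_right hn))
  · exact ne_top_of_le_ne_top h (posTrace_mono e (habs ▸ le_add_of_nonneg_left hp))
  · rw [CFC.sqrt_mul_sqrt_self _ hp, CFC.sqrt_mul_sqrt_self _ hn, CFC.posPart_sub_negPart Q hQ]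

end Decomposition

/-! ### Resolvents of a selfadjoint contraction -/

section Resolvent

/-- The reason is `1 - (2B - 1)² = 4 (B - B²)` and `B - B² = B (1 - B) B + (1 - B) B (1 - B) ≥ 0`. -/
theorem norm_reflection_le_one {𝔸 : Type*} [CStarAlgebra 𝔸] [PartialOrder 𝔸] [StarOrderedRing 𝔸]
    {B : 𝔸} (hB : IsSelfAdjoint B) (hB0 : 0 ≤ B) (hB1 : B ≤ 1) : ‖2 • B - 1‖ ≤ 1 := by
  have h1 : 0 ≤ B * (1 - B) * B + (1 - B) * B * (1 - B) :=
    add_nonneg (hB.conjugate_nonneg (sub_nonneg.2 hB1))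
      (((IsSelfAdjoint.one _).sub hB).conjugate_nonneg hB0)
  have hX : IsSelfAdjoint (2 • B - 1) := by
    rw [two_nsmul]
    exact (hB.add hB).sub (.one _)
  have h2 : (2 • B - 1) * (2 • B - 1) ≤ 1 := by
    rw [← sub_nonneg]
    have : 1 - (2 • B - 1) * (2 • B - 1) =
        4 • (B * (1 - B) * B + (1 - B) * B * (1 - B)) := by noncomm_ring
    rw [this]
    exact nsmul_nonneg h1 4
  have h3 : ‖(2 • B - 1) * (2 • B - 1)‖ ≤ 1 :=
    (CStarAlgebra.norm_le_one_iff_of_nonneg _ (hX.mul_self_nonneg)).2 h2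
  rw [hX.norm_mul_self] at h3
  nlinarith [norm_nonneg (2 • B - 1)]

theorem commute_ringInverse {R : Type*} [Ring R] {a b : R} (h : Commute a b) :
    Commute a (Ring.inverse b) := by
  by_cases hb : IsUnit b
  · obtain ⟨u, rfl⟩ := hb
    rw [Ring.inverse_unit]
    exact h.units_inv_right
  · rw [Ring.inverse_non_unit _ hb]
    exact Commute.zero_right a

variable {𝔸 : Type*} [CStarAlgebra 𝔸]

/-- The inverse of `c - l X`, meaningful (not the junk value of `Ring.inverse`) when `‖X‖ ≤ 1`,
`|l| < 1` and `c ≥ 1`. With `X = 2B - 1` this gives both resolvents in the statement: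
`R_{l,t}(B)` is the case `c = 1 + t`, and `T_l = X (1 - l X)⁻¹`. It lives in an abstract
C⋆-algebra since nothing about it depends on the underlying Hilbert space. -/
noncomputable def shiftInv (X : 𝔸) (l c : ℝ) : 𝔸 :=
  Ring.inverse ((c : ℂ) • 1 - (l : ℂ) • X)

theorem isUnit_shift {X : 𝔸} (hX : ‖X‖ ≤ 1) {l c : ℝ} (hl : l ∈ Set.Ioo (-1 : ℝ) 1) (hc : 1 ≤ c) :
    IsUnit ((c : ℂ) • 1 - (l : ℂ) • X) := by
  have h0 : (c : ℂ) ≠ 0 := Complex.ofReal_ne_zero.2 (by positivity)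
  have h1 : IsUnit (1 - ((l / c : ℝ) : ℂ) • X) := by
    refine isUnit_one_sub_of_norm_lt_one ?_
    rw [norm_smul, Complex.norm_real, Real.norm_eq_abs, abs_div, abs_of_pos (by linarith : 0 < c)]
    have h2 : |l| / c < 1 := by
      rw [div_lt_one (by linarith)]
      exact (abs_lt.2 hl).trans_le hc
    have h3 : 0 ≤ |l| / c := by positivity
    nlinarith [norm_nonneg X]
  have h2 := h1.smul (Units.mk0 _ h0)
  rwa [Units.smul_mk0, smul_sub, smul_smul, Complex.ofReal_div, mul_div_cancel₀ _ h0] at h2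

theorem isSelfAdjoint_shiftInv {X : 𝔸} (hX : IsSelfAdjoint X) (l c : ℝ) :
    IsSelfAdjoint (shiftInv X l c) := by
  have hc : ∀ r : ℝ, IsSelfAdjoint (r : ℂ) := fun r => Complex.conj_ofReal r
  exact (((hc c).smul (.one 𝔸)).sub ((hc l).smul hX)).ringInverse

theorem isSelfAdjoint_mul_shiftInv {X : 𝔸} (hX : IsSelfAdjoint X) (l c : ℝ) :
    IsSelfAdjoint (X * shiftInv X l c) := by
  refine (hX.commute_iff (isSelfAdjoint_shiftInv hX l c)).1 ?_
  refine commute_ringInverse ?_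
  exact ((Commute.one_right X).smul_right _).sub_right ((Commute.refl X).smul_right _)

theorem shiftInv_one_eq {X : 𝔸} (hX : ‖X‖ ≤ 1) {l : ℝ} (hl : l ∈ Set.Ioo (-1 : ℝ) 1) :
    shiftInv X l 1 = 1 + (l : ℂ) • (X * shiftInv X l 1) := by
  have hu := Ring.mul_inverse_cancel _ (isUnit_shift hX hl le_rfl)
  rw [sub_mul, Complex.ofReal_one, one_smul, one_mul, smul_mul_assoc] at hu
  rw [shiftInv, Complex.ofReal_one, one_smul]
  exact sub_eq_iff_eq_add.1 hu

theorem continuousOn_shiftInv {X : 𝔸} (hX : ‖X‖ ≤ 1) :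
    ContinuousOn (fun l => X * shiftInv X l 1) (Set.Ioo (-1 : ℝ) 1) := by
  intro l hl
  refine ContinuousAt.continuousWithinAt ?_
  have h := NormedRing.inverse_continuousAt (isUnit_shift hX hl le_rfl).unit
  refine continuousAt_const.mul (ContinuousAt.comp
    (f := fun l : ℝ => ((1 : ℝ) : ℂ) • 1 - (l : ℂ) • X) (g := Ring.inverse) h ?_)
  fun_prop

theorem hasDerivAt_shiftInv {X : 𝔸} (hX : ‖X‖ ≤ 1) {l c : ℝ} (hl : l ∈ Set.Ioo (-1 : ℝ) 1)
    (hc : 1 ≤ c) :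
    HasDerivAt (fun c => shiftInv X l c) (-(shiftInv X l c * shiftInv X l c)) c := by
  have hu := isUnit_shift hX hl hc
  have h := hasFDerivAt_ringInverse (𝕜 := ℝ) hu.unit
  have hd : HasDerivAt (fun c : ℝ => (c : ℂ) • (1 : 𝔸) - (l : ℂ) • X) 1 c := by
    have h1 : HasDerivAt (fun c : ℝ => (c : ℂ)) 1 c := (hasDerivAt_id c).ofReal_comp
    simpa using (h1.smul_const (1 : 𝔸)).sub_const ((l : ℂ) • X)
  have h3 := h.comp_hasDerivAt c hd
  have h4 : shiftInv X l c = (hu.unit⁻¹ : 𝔸ˣ) := Ring.inverse_of_isUnit hu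
  rw [h4]
  refine HasDerivAt.congr_deriv h3 ?_
  simp

/-- The bound comes from `c S = 1 + l X S` for `S = (c - l X)⁻¹`. -/
theorem norm_shiftInv_le {X : 𝔸} (hX : ‖X‖ ≤ 1) {l c : ℝ} (hl : l ∈ Set.Ioo (-1 : ℝ) 1)
    (hc : 1 ≤ c) : (c - |l|) * ‖shiftInv X l c‖ ≤ 1 := by
  rcases subsingleton_or_nontrivial 𝔸 with h | h
  · rw [Subsingleton.elim (shiftInv X l c) 0]; simp
  have hu := Ring.mul_inverse_cancel _ (isUnit_shift hX hl hc)
  rw [← shiftInv, sub_mul, smul_mul_assoc, one_mul, sub_eq_iff_eq_add] at hu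
  have h1 := congrArg norm hu
  rw [norm_smul, Complex.norm_real, Real.norm_of_nonneg (by linarith)] at h1
  have h2 := norm_add_le (1 : 𝔸) ((l : ℂ) • X * shiftInv X l c)
  have h3 := norm_mul_le ((l : ℂ) • X) (shiftInv X l c)
  rw [norm_smul, Complex.norm_real, Real.norm_eq_abs] at h3
  rw [CStarRing.norm_one] at h2
  have h4 : |l| * ‖X‖ * ‖shiftInv X l c‖ ≤ |l| * 1 * ‖shiftInv X l c‖ := by gcongr
  linarith

theorem tendsto_shiftInv {X : 𝔸} (hX : ‖X‖ ≤ 1) {l : ℝ} (hl : l ∈ Set.Ioo (-1 : ℝ) 1) :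
    Filter.Tendsto (fun t => shiftInv X l (1 + t)) Filter.atTop (nhds 0) := by
  refine squeeze_zero_norm' ?_ tendsto_inv_atTop_zero
  filter_upwards [Filter.eventually_gt_atTop 0] with t ht
  have h := norm_shiftInv_le hX hl (c := 1 + t) (by linarith)
  have h1 : |l| < 1 := abs_lt.2 hl
  rw [← one_div, le_div_iff₀ ht]
  nlinarith [norm_nonneg (shiftInv X l (1 + t)), h1]

/-- For a functional `τ` nonnegative on squares of selfadjoint elements, `Re τ(R_t²)` with
`R_t = (1 + t - l X)⁻¹` integrates over `t ∈ (0, ∞)` to `Re τ(R_0)`, since `d/dt R_t = -R_t²`;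
nonnegativity of the integrand makes the improper integral absolutely convergent. -/
theorem integral_sq_shiftInv {X : 𝔸} (hX : ‖X‖ ≤ 1) (hXs : IsSelfAdjoint X) {l : ℝ}
    (hl : l ∈ Set.Ioo (-1 : ℝ) 1) (τ : 𝔸 →L[ℂ] ℂ)
    (hτ : ∀ S, IsSelfAdjoint S → 0 ≤ (τ (S * S)).re) :
    IntegrableOn (fun t => (τ (shiftInv X l (1 + t) * shiftInv X l (1 + t))).re) (Set.Ioi 0) ∧
    ∫ t in Set.Ioi (0 : ℝ), (τ (shiftInv X l (1 + t) * shiftInv X l (1 + t))).re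
      = (τ (shiftInv X l 1)).re := by
  have hder : ∀ t ∈ Set.Ici (0 : ℝ), HasDerivAt (fun t => -(τ (shiftInv X l (1 + t))).re)
      (τ (shiftInv X l (1 + t) * shiftInv X l (1 + t))).re t := by
    intro t ht
    have h1 := (hasDerivAt_shiftInv hX hl (c := 1 + t) (by linarith [Set.mem_Ici.1 ht])).comp_const_add 1 t
    let ρ : 𝔸 →L[ℝ] ℝ := Complex.reCLM.comp (τ.restrictScalars ℝ)
    have h2 := (ρ.hasFDerivAt.comp_hasDerivAt t h1).neg
    refine HasDerivAt.congr_deriv h2 ?_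
    simp [ρ]
  have hlim : Filter.Tendsto (fun t => -(τ (shiftInv X l (1 + t))).re) Filter.atTop (nhds 0) := by
    have h1 := (Complex.continuous_re.comp τ.continuous).neg.tendsto (0 : 𝔸)
    have h2 := h1.comp (tendsto_shiftInv hX hl)
    simp only [Pi.neg_apply, Function.comp_apply, map_zero, Complex.zero_re, neg_zero] at h2
    exact h2
  have hpos : ∀ t ∈ Set.Ioi (0 : ℝ), 0 ≤ (τ (shiftInv X l (1 + t) * shiftInv X l (1 + t))).re :=
    fun t _ => hτ _ (isSelfAdjoint_shiftInv hXs _ _)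
  refine ⟨integrableOn_Ioi_deriv_of_nonneg' hder hpos hlim, ?_⟩
  rw [integral_Ioi_of_hasDerivAt_of_nonneg' hder hpos hlim]
  simp

end Resolvent

/-! ### Weak operator integrals -/

section WeakIntegral

variable {H : Type*} [NormedAddCommGroup H] [InnerProductSpace ℂ H]

/-- Distinct basis vectors are at distance `√2`, so the balls of radius `1/2` around them are
disjoint. -/
theorem countable_of_hilbertBasis [TopologicalSpace.SeparableSpace H] {ι : Type*}
    (e : HilbertBasis ι ℂ H) : Countable ι := by
  refine Pairwise.countable_of_isOpen_disjoint (s := fun i => Metric.ball (e i) (1 / 2))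
    (fun i j hij => ?_) (fun i => Metric.isOpen_ball)
    (fun i => ⟨e i, Metric.mem_ball_self (by norm_num)⟩)
  refine Metric.ball_disjoint_ball ?_
  have h := norm_sub_sq (𝕜 := ℂ) (e i) (e j)
  rw [e.orthonormal.2 hij, e.orthonormal.1, e.orthonormal.1, ← dist_eq_norm] at h
  simp at h
  nlinarith [dist_nonneg (x := e i) (y := e j)]

variable [CompleteSpace H]

/-- If all matrix coefficients of an operator-valued function are integrable, their `L¹` norms
are bounded by a multiple of `‖ψ‖ ‖η‖`: the integrals of `g • T`, over scalar `g` bounded by one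
for which this Bochner integral exists, are weakly bounded, so the uniform boundedness principle
applies; the bound then follows by choosing `g` as the phase of the matrix coefficient, cut off
where `‖T‖` is large. -/
theorem exists_weak_bound {Ω : Type*} [MeasurableSpace Ω] {ν : Measure Ω} [IsFiniteMeasure ν]
    {T : Ω → H →L[ℂ] H} (hT : AEStronglyMeasurable T ν)
    (hint : ∀ ψ η : H, Integrable (fun l => ⟪ψ, T l η⟫_ℂ) ν) :
    ∃ C : ℝ, ∀ ψ η : H, ∫ l, ‖⟪ψ, T l η⟫_ℂ‖ ∂ν ≤ C * ‖ψ‖ * ‖η‖ := by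
  let G := {g : Ω → ℂ // (∀ l, ‖g l‖ ≤ 1) ∧ Integrable (fun l => g l • T l) ν}
  let S : G → H →L[ℂ] H := fun g => ∫ l, g.1 l • T l ∂ν
  have hS : ∀ (g : G) (ψ η : H), ⟪ψ, S g η⟫_ℂ = ∫ l, g.1 l * ⟪ψ, T l η⟫_ℂ ∂ν := by
    intro g ψ η
    have h1 := ContinuousLinearMap.integral_apply g.2.2 η
    have h2 := integral_inner (𝕜 := ℂ) (g.2.2.apply_continuousLinearMap η) ψ
    simp only [S]
    rw [h1, ← h2]
    simp [inner_smul_right]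
  have hb : ∀ (g : G) (ψ η : H), ‖⟪ψ, S g η⟫_ℂ‖ ≤ ∫ l, ‖⟪ψ, T l η⟫_ℂ‖ ∂ν := by
    intro g ψ η
    rw [hS]
    refine norm_integral_le_of_norm_le (hint ψ η).norm (Filter.Eventually.of_forall fun l => ?_)
    rw [norm_mul]
    exact mul_le_of_le_one_left (norm_nonneg _) (g.2.1 l)
  obtain ⟨C, hC⟩ : ∃ C, ∀ g, ‖S g‖ ≤ C := by
    refine banach_steinhaus fun η => ?_
    have := banach_steinhaus (g := fun g : G => innerSL ℂ (S g η)) fun ψ =>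
      ⟨∫ l, ‖⟪ψ, T l η⟫_ℂ‖ ∂ν, fun g => by
        rw [innerSL_apply_apply, norm_inner_symm]; exact hb g ψ η⟩
    simpa only [innerSL_apply_norm] using this
  refine ⟨C, fun ψ η => ?_⟩
  -- `z` is the matrix coefficient, `w n` the cutoff, `g n` the phase cut off by `w n`.
  let z : Ω → ℂ := fun l => ⟪ψ, T l η⟫_ℂ
  let w : ℕ → Ω → ℝ := fun n l => Set.indicator (Set.Iic (n : ℝ)) 1 ‖T l‖
  have hw0 : ∀ n l, 0 ≤ w n l := fun n l => Set.indicator_nonneg (fun _ _ => zero_le_one) _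
  have hw1 : ∀ n l, w n l ≤ 1 := fun n l => Set.indicator_le_self' (fun _ _ => zero_le_one) _
  have hwT : ∀ n l, w n l * ‖T l‖ ≤ n := by
    intro n l
    by_cases h : ‖T l‖ ≤ n <;> simp [w, h]
  have hwm : ∀ n, AEMeasurable (w n) ν := fun n =>
    (measurable_one.indicator measurableSet_Iic).comp_aemeasurable hT.norm.aemeasurable
  have hz : AEMeasurable z ν := (hint ψ η).aestronglyMeasurable.aemeasurable
  let g : ℕ → Ω → ℂ := fun n l => (w n l : ℂ) * ((starRingEnd ℂ) (z l) / ‖z l‖)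
  have hgw : ∀ n l, ‖g n l‖ ≤ w n l := by
    intro n l
    simp only [g, norm_mul, norm_div, Complex.norm_real, RCLike.norm_conj, norm_norm,
      Real.norm_of_nonneg (hw0 n l)]
    exact mul_le_of_le_one_right (hw0 n l) (div_self_le_one _)
  have hgm : ∀ n, AEMeasurable (g n) ν := fun n =>
    (Complex.measurable_ofReal.comp_aemeasurable (hwm n)).mul
      ((Complex.continuous_conj.measurable.comp_aemeasurable hz).div
        (Complex.measurable_ofReal.comp_aemeasurable hz.norm))
  have hgi : ∀ n, Integrable (fun l => g n l • T l) ν := fun n =>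
    Integrable.of_bound ((hgm n).aestronglyMeasurable.smul hT) n
      (Filter.Eventually.of_forall fun l => by
        rw [norm_smul]
        exact (mul_le_mul_of_nonneg_right (hgw n l) (norm_nonneg _)).trans (hwT n l))
  have hgz : ∀ n l, g n l * z l = ((w n l * ‖z l‖ : ℝ) : ℂ) := by
    intro n l
    by_cases h : z l = 0
    · simp [h]
    · have : (‖z l‖ : ℂ) ≠ 0 := by simpa using h
      simp only [g]
      rw [mul_assoc, div_mul_eq_mul_div, ← Complex.normSq_eq_conj_mul_self,
        Complex.normSq_eq_norm_sq]
      push_cast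
      field_simp
  have hle : ∀ n, ∫ l, w n l * ‖z l‖ ∂ν ≤ C * ‖ψ‖ * ‖η‖ := by
    intro n
    let gn : G := ⟨g n, fun l => (hgw n l).trans (hw1 n l), hgi n⟩
    have h1 : ⟪ψ, S gn η⟫_ℂ = ((∫ l, w n l * ‖z l‖ ∂ν : ℝ) : ℂ) := by
      rw [hS, ← integral_complex_ofReal]
      exact integral_congr_ae (Filter.Eventually.of_forall fun l => hgz n l)
    have h2 : ‖⟪ψ, S gn η⟫_ℂ‖ ≤ ‖ψ‖ * (C * ‖η‖) :=
      (norm_inner_le_norm _ _).trans (mul_le_mul_of_nonneg_left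
        ((S gn).le_of_opNorm_le (hC gn) η) (norm_nonneg _))
    rw [h1, Complex.norm_real] at h2
    calc _ ≤ _ := le_abs_self _
      _ ≤ _ := h2
      _ = _ := by ring
  refine le_of_tendsto' (tendsto_integral_of_dominated_convergence (fun l => ‖z l‖)
    (fun n => ((hwm n).mul hz.norm).aestronglyMeasurable) (hint ψ η).norm
    (fun n => Filter.Eventually.of_forall fun l => ?_)
    (Filter.Eventually.of_forall fun l => ?_)) hle
  · change ‖w n l * ‖z l‖‖ ≤ ‖z l‖
    rw [Real.norm_of_nonneg (mul_nonneg (hw0 n l) (norm_nonneg _))]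
    exact mul_le_of_le_one_left (norm_nonneg _) (hw1 n l)
  · refine tendsto_const_nhds.congr' ?_
    filter_upwards [Filter.eventually_ge_atTop ⌈‖T l‖⌉₊] with n hn
    have : ‖T l‖ ≤ n := Nat.ceil_le.1 hn
    simp [w, this, z]

/-- The functional `S ↦ ∑ i, ⟪v i, S (v i)⟫` commutes with weak operator integrals: by the uniform
bound on matrix coefficients, `∑ i, ∫ |⟪v i, T l (v i)⟫| ≤ C ∑ i, ‖v i‖²`, so Fubini applies. -/
theorem integral_quadFunctional {Ω : Type*} [MeasurableSpace Ω] {ν : Measure Ω}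
    [IsFiniteMeasure ν] {T : Ω → H →L[ℂ] H} (hT : AEStronglyMeasurable T ν) {M : H →L[ℂ] H}
    (hM : ∀ ψ η : H, Integrable (fun l => ⟪ψ, T l η⟫_ℂ) ν ∧
      ∫ l, ⟪ψ, T l η⟫_ℂ ∂ν = ⟪ψ, M η⟫_ℂ)
    {ι : Type*} [Countable ι] (v : ι → H) (hv : Summable fun i => ‖v i‖ ^ 2) :
    Integrable (fun l => quadFunctional v hv (T l)) ν ∧
      ∫ l, quadFunctional v hv (T l) ∂ν = quadFunctional v hv M := by
  obtain ⟨C, hC⟩ := exists_weak_bound hT fun ψ η => (hM ψ η).1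
  have hsum : Summable fun i => ∫ l, ‖⟪v i, T l (v i)⟫_ℂ‖ ∂ν := by
    refine Summable.of_nonneg_of_le (fun i => integral_nonneg fun l => norm_nonneg _)
      (fun i => ?_) (hv.mul_left C)
    have := hC (v i) (v i)
    rwa [mul_assoc, ← sq] at this
  have h := hasSum_integral_of_summable_integral_norm
    (F := fun i l => ⟪v i, T l (v i)⟫_ℂ) (fun i => (hM (v i) (v i)).1) hsum
  constructor
  · refine ⟨(quadFunctional v hv).continuous.comp_aestronglyMeasurable hT, ?_⟩
    calc ∫⁻ l, ‖quadFunctional v hv (T l)‖ₑ ∂ν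
        ≤ ∫⁻ l, ∑' i, ‖⟪v i, T l (v i)⟫_ℂ‖ₑ ∂ν := lintegral_mono fun l => enorm_tsum_le_tsum_enorm
      _ = ∑' i, ENNReal.ofReal (∫ l, ‖⟪v i, T l (v i)⟫_ℂ‖ ∂ν) := by
          rw [lintegral_tsum fun i => (hM (v i) (v i)).1.aestronglyMeasurable.enorm]
          exact tsum_congr fun i =>
            (ofReal_integral_norm_eq_lintegral_enorm (hM (v i) (v i)).1).symm
      _ < ⊤ := hsum.tsum_ofReal_lt_top
  · simp only [quadFunctional_apply]
    rw [← h.tsum_eq]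
    exact tsum_congr fun i => (hM (v i) (v i)).2

end WeakIntegral

/-! ### The integrand as a trace, and the trace formula -/

section Integrand

variable {H : Type*} [NormedAddCommGroup H] [InnerProductSpace ℂ H] [CompleteSpace H]

theorem resolventOp_eq_shiftInv (B : H →L[ℂ] H) (l t : ℝ) :
    resolventOp l t B = shiftInv (2 • B - 1) l (1 + t) := by
  rw [resolventOp, shiftInv]
  congr 1
  rw [smul_sub, smul_sub, Complex.ofReal_add, add_smul, Complex.ofReal_one, one_smul]
  abel

theorem opTlam_eq_shiftInv (B : H →L[ℂ] H) (l : ℝ) :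
    opTlam B l = (2 • B - 1) * shiftInv (2 • B - 1) l 1 := by
  rw [opTlam, shiftInv, Complex.ofReal_one, one_smul]

/-- If `τ` is the functional `S ↦ tr (S Q)`, then `F(λ) = -2 Re τ(T_λ)`. For `λ ≠ 0` the trace
integral is `τ` of the resolvent at `t = 0`, and `(1 - λX)⁻¹ = 1 + λ T_λ` with `X = 2B - 1`. -/
theorem traceIntegrand_eq {ι : Type*} {e : HilbertBasis ι ℂ H} {B Q : H →L[ℂ] H}
    (hX : ‖2 • B - 1‖ ≤ 1) (hXs : IsSelfAdjoint (2 • B - 1)) {l : ℝ}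
    (hl : l ∈ Set.Ioo (-1 : ℝ) 1) {τ : (H →L[ℂ] H) →L[ℂ] ℂ}
    (hτ : ∀ S T : H →L[ℂ] H, HasSum (fun i => ⟪e i, (S * Q * T) (e i)⟫_ℂ) (τ (T * S)))
    (hint : ∫ t in Set.Ioi (0 : ℝ), (τ (shiftInv (2 • B - 1) l (1 + t) *
        shiftInv (2 • B - 1) l (1 + t))).re = (τ (shiftInv (2 • B - 1) l 1)).re) :
    traceIntegrand e B Q l = -2 * (τ (opTlam B l)).re := by
  have hre : ∀ S T : H →L[ℂ] H,
      ∑' i, (⟪e i, (S * Q * T) (e i)⟫_ℂ).re = (τ (T * S)).re :=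
    fun S T => (Complex.hasSum_re (hτ S T)).tsum_eq
  rw [traceIntegrand]
  split_ifs with h0
  · subst h0
    have h1 := hre (1 - 2 • B) 1
    rw [mul_one, one_mul] at h1
    rw [h1, opTlam, Complex.ofReal_zero, zero_smul, sub_zero, Ring.inverse_one, mul_one,
      ← neg_sub, map_neg, Complex.neg_re]
    ring
  · have h1 := hre 1 1
    simp only [one_mul, mul_one] at h1
    simp_rw [hre, h1, resolventOp_eq_shiftInv]
    rw [hint, shiftInv_one_eq hX hl, ← opTlam_eq_shiftInv, map_add, map_smul, Complex.add_re,
      smul_eq_mul, Complex.re_ofReal_mul]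
    field_simp
    ring

end Integrand

/-- (Essentially Eqs. (47)–(58) of Deuchert–Hainzl–Seiringer.) For `0 ≤ A, B ≤ 1` bounded
selfadjoint with `Q = A − B` trace class, `μ` a Borel probability measure on `[−1,1]` with
no atoms at `±1`, and `M` the weak integral `∫ T_λ dμ(λ)`:
`MQ` is trace class, `F` is `μ`-integrable on `(−1,1)`, and
`tr[aQ + bMQ] = a tr Q − (b/2) ∫_{(−1,1)} F(λ) dμ(λ)`. -/
theorem trace_eq_integral_traceIntegrand
    {H : Type*} [NormedAddCommGroup H] [InnerProductSpace ℂ H] [CompleteSpace H]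
    [TopologicalSpace.SeparableSpace H]
    (A B : H →L[ℂ] H) (hA : IsSelfAdjoint A) (hB : IsSelfAdjoint B)
    (hA0 : 0 ≤ A) (hA1 : A ≤ 1) (hB0 : 0 ≤ B) (hB1 : B ≤ 1)
    {ι : Type*} (e : HilbertBasis ι ℂ H)
    (hQtc : IsTraceClass e (A - B))
    (a b : ℝ) (hb : 0 ≤ b)
    (μ : Measure ℝ) [IsProbabilityMeasure μ]
    (hμsupp : μ (Set.Icc (-1:ℝ) 1)ᶜ = 0)
    (hμm1 : μ {(-1:ℝ)} = 0) (hμ1 : μ {(1:ℝ)} = 0)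
    (M : H →L[ℂ] H)
    (hM : ∀ ψ η : H,
      Integrable (fun l => ⟪ψ, opTlam B l η⟫_ℂ) (μ.restrict (Set.Ioo (-1:ℝ) 1)) ∧
      (∫ l in Set.Ioo (-1:ℝ) 1, ⟪ψ, opTlam B l η⟫_ℂ ∂μ) = ⟪ψ, M η⟫_ℂ) :
    IsTraceClass e (M * (A - B)) ∧
    IntegrableOn (traceIntegrand e B (A - B)) (Set.Ioo (-1:ℝ) 1) μ ∧
    (∑' i : ι, ⟪e i, ((a:ℂ) • (A - B) + (b:ℂ) • (M * (A - B))) (e i)⟫_ℂ)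
      = ((a * (∑' i : ι, (⟪e i, (A - B) (e i)⟫_ℂ).re)
          - (b/2) * ∫ l in Set.Ioo (-1:ℝ) 1, traceIntegrand e B (A - B) l ∂μ : ℝ) : ℂ) := by
  have hQ : IsSelfAdjoint (A - B) := hA.sub hB
  refine ⟨hQtc.mul_left M, ?_⟩
  obtain ⟨K, L, hK, hL, hKs, hLs, hKL⟩ := exists_hilbertSchmidt_decomposition hQ hQtc
  set Q := A - B
  have : Countable ι := countable_of_hilbertBasis e
  have hX : ‖2 • B - 1‖ ≤ 1 := norm_reflection_le_one hB hB0 hB1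
  have hXs : IsSelfAdjoint (2 • B - 1) := by
    rw [two_nsmul]
    exact (hB.add hB).sub (IsSelfAdjoint.one _)
  set ν := μ.restrict (Set.Ioo (-1 : ℝ) 1)
  have hTm : AEStronglyMeasurable (opTlam B) ν := by
    refine ContinuousOn.aestronglyMeasurable ?_ measurableSet_Ioo
    exact (continuousOn_shiftInv hX).congr fun l _ => opTlam_eq_shiftInv B l
  -- `Q = K² - L²`, so `τ₁ S = tr (S K²)`, `τ₂ S = tr (S L²)` and `τ S = tr (S Q)`.
  let τ₁ := quadFunctional (fun i => K (e i)) hKs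
  let τ₂ := quadFunctional (fun i => L (e i)) hLs
  let τ := τ₁ - τ₂
  have hτ : ∀ S T : H →L[ℂ] H, HasSum (fun i => ⟪e i, (S * Q * T) (e i)⟫_ℂ) (τ (T * S)) := by
    intro S T
    refine ((hasSum_trace_conj hK hKs S T).sub (hasSum_trace_conj hL hLs S T)).congr_fun ?_
    intro i
    rw [hKL, mul_sub, sub_mul, sub_apply, inner_sub_right]
  -- The trace in the claim is complex valued; both `tr Q` and `tr (MQ)` turn out to be real.
  have hτim : ∀ S : H →L[ℂ] H, IsSelfAdjoint S → (τ S).im = 0 := fun S hS => by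
    change (τ₁ S - τ₂ S).im = 0
    rw [Complex.sub_im, quadFunctional_im _ _ hS, quadFunctional_im _ _ hS, sub_zero]
  have hF : ∀ l ∈ Set.Ioo (-1 : ℝ) 1, traceIntegrand e B Q l = -2 * (τ (opTlam B l)).re := by
    intro l hl
    refine traceIntegrand_eq hX hXs hl hτ ?_
    have h1 := integral_sq_shiftInv hX hXs hl τ₁ fun S hS => quadFunctional_sq_nonneg _ _ hS
    have h2 := integral_sq_shiftInv hX hXs hl τ₂ fun S hS => quadFunctional_sq_nonneg _ _ hS
    change ∫ t in Set.Ioi (0 : ℝ), (τ₁ _ - τ₂ _).re = (τ₁ _ - τ₂ _).re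
    simp only [Complex.sub_re]
    rw [integral_sub h1.1 h2.1, h1.2, h2.2]
  have hI₁ := integral_quadFunctional hTm hM (fun i => K (e i)) hKs
  have hI₂ := integral_quadFunctional hTm hM (fun i => L (e i)) hLs
  have hτi : Integrable (fun l => τ (opTlam B l)) ν := hI₁.1.sub hI₂.1
  have hτM : ∫ l, τ (opTlam B l) ∂ν = τ M := by
    change ∫ l, (τ₁ (opTlam B l) - τ₂ (opTlam B l)) ∂ν = τ₁ M - τ₂ M
    rw [integral_sub hI₁.1 hI₂.1, hI₁.2, hI₂.2]
  have hτre : (τ M : ℂ) = ((∫ l, (τ (opTlam B l)).re ∂ν : ℝ) : ℂ) := by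
    rw [← hτM, ← integral_complex_ofReal]
    refine integral_congr_ae (Filter.Eventually.of_forall fun l => ?_)
    refine Complex.ext rfl ?_
    rw [Complex.ofReal_im]
    change (τ (opTlam B l)).im = 0
    rw [opTlam_eq_shiftInv]
    exact hτim _ (isSelfAdjoint_mul_shiftInv hXs l 1)
  have hFi : IntegrableOn (traceIntegrand e B Q) (Set.Ioo (-1 : ℝ) 1) μ :=
    IntegrableOn.congr_fun (f := fun l => -2 * (τ (opTlam B l)).re)
      (hτi.re.const_mul (-2)) (fun l hl => (hF l hl).symm) measurableSet_Ioo
  refine ⟨hFi, ?_⟩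
  have hFint : ∫ l in Set.Ioo (-1 : ℝ) 1, traceIntegrand e B Q l ∂μ
      = -2 * ∫ l, (τ (opTlam B l)).re ∂ν := by
    rw [setIntegral_congr_fun measurableSet_Ioo hF, integral_const_mul]
  have htrQ : HasSum (fun i => ⟪e i, Q (e i)⟫_ℂ) (τ 1) := by simpa using hτ 1 1
  have htrMQ : HasSum (fun i => ⟪e i, (M * Q) (e i)⟫_ℂ) (τ M) := by simpa using hτ M 1
  have hτ1 : τ 1 = ((τ 1).re : ℂ) := Complex.ext rfl (hτim 1 (IsSelfAdjoint.one _))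
  have hsum : HasSum (fun i => ⟪e i, ((a : ℂ) • Q + (b : ℂ) • (M * Q)) (e i)⟫_ℂ)
      (a * τ 1 + b * τ M) := by
    refine ((htrQ.mul_left (a : ℂ)).add (htrMQ.mul_left (b : ℂ))).congr_fun fun i => ?_
    rw [_root_.add_apply, _root_.smul_apply, _root_.smul_apply, inner_add_right, inner_smul_right,
      inner_smul_right]
  rw [hsum.tsum_eq, (Complex.hasSum_re htrQ).tsum_eq, hFint, hτre, hτ1]
  push_cast
  simp only [Complex.ofReal_re]
  ring
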